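/- Let $K$ be a field and $V$ a nonzero finite-dimensional $K$-vector space of dimension $r$. Let $\mathcal{F}$ and $\mathcal{G}$ be two $\mathbb{R}$-filtrations of $V$, and let $\mathbf{e} = (e_1, \ldots, e_r)$ and $\mathbf{e}' = (e'_1, \ldots, e'_r)$ be two bases of $V$, each of which is compatible with both $\mathcal{F}$ and $\mathcal{G}$. Then $\sum_{i=1}^r \lambda_{\mathcal{F}}(e_i)\, \lambda_{\mathcal{G}}(e_i) = \sum_{i=1}^r \lambda_{\mathcal{F}}(e'_i)\, \lambda_{\mathcal{G}}(e'_i)$; that is, the scalar product $\langle \mathcal{F}, \mathcal{G} \rangle = \frac{1}{r} \sum_{i=1}^r \lambda_{\mathcal{F}}(e_i) \lambda_{\mathcal{G}}(e_i)$ does not depend on the choice of the common compatible basis. -/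

import Mathlib

/-- An `ℝ`-filtration of a `K`-vector space `V`: a decreasing, left-continuous family of
subspaces which is `0` for sufficiently large indices and `V` for sufficiently small ones. -/
structure RFiltration (K V : Type*) [Field K] [AddCommGroup V] [Module K V] where
  /-- the family of subspaces -/
  F : ℝ → Submodule K V
  antitone : Antitone F
  eventually_bot : ∃ a : ℝ, ∀ b : ℝ, a ≤ b → F b = ⊥
  eventually_top : ∃ a : ℝ, ∀ b : ℝ, b ≤ a → F b = ⊤
  left_continuous : ∀ a : ℝ, F a = ⨅ b : {b : ℝ // b < a}, F (b : ℝ)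

namespace RFiltration

variable {K V : Type*} [Field K] [AddCommGroup V] [Module K V]

/-- `λ_𝓕(x) = sup { a | x ∈ 𝓕_a V }` (a real number; meaningful for `x ≠ 0`). -/
noncomputable def lambda (𝓕 : RFiltration K V) (x : V) : ℝ :=
  sSup {a : ℝ | x ∈ 𝓕.F a}

/-- A family of vectors `e` is compatible with the filtration `𝓕` if each subspace `𝓕_a V`
is spanned by the vectors of the family it contains. -/
def Compatible {ι : Type*} (𝓕 : RFiltration K V) (e : ι → V) : Prop :=
  ∀ a : ℝ, 𝓕.F a = Submodule.span K (Set.range e ∩ (𝓕.F a : Set V))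

/-- The filtration `𝓕` is supported by `Z ⊆ ℝ` if all its jump values lie in `Z`,
i.e. `λ_𝓕(x) ∈ Z` for every nonzero `x`. -/
def SupportedBy (𝓕 : RFiltration K V) (Z : Set ℝ) : Prop :=
  ∀ x : V, x ≠ 0 → 𝓕.lambda x ∈ Z

end RFiltration

/-!
Give `ℝ × ℝ` the product order. Compatibility makes `𝓕_a ∩ 𝓖_b` the span of the basis vectors whose
pair `(λ_𝓕, λ_𝓖)` dominates `(a, b)`. The span of those whose pair strictly dominates `(a, b)` is
the sum of the `𝓕_a' ∩ 𝓖_b'` over `(a', b') > (a, b)`, hence it does not depend on the basis either,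
and the vectors with pair exactly `(a, b)` map to a basis of the quotient of the two spans. So the
number of basis vectors with a given pair is intrinsic.
-/

section LinearIndependent

open Submodule

variable {R M ι ι' : Type*} [Ring R] [AddCommGroup M] [Module R M]

theorem span_image_inter {v : ι → M} (hv : LinearIndependent R v) (s t : Set ι) :
    span R (v '' (s ∩ t)) = span R (v '' s) ⊓ span R (v '' t) := by
  simp only [Finsupp.span_image_eq_map_linearCombination, Finsupp.supported_inter,
    Submodule.map_inf _ hv]

theorem map_mkQ_span_image_union (v : ι → M) (s t : Set ι) :
    (span R (v '' (s ∪ t))).map (span R (v '' s)).mkQ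
      = span R (((span R (v '' s)).mkQ ∘ v) '' t) := by
  rw [Set.image_union, span_union, Submodule.map_sup, mkQ_map_self, bot_sup_eq, map_span,
    Set.image_comp]

theorem nonempty_basis_map_mkQ_span_image_union {v : ι → M} {s t : Set ι}
    (hv : LinearIndepOn R v (s ∪ t)) (hst : Disjoint s t) :
    Nonempty (Module.Basis t R ((span R (v '' (s ∪ t))).map (span R (v '' s)).mkQ)) := by
  have hquot : LinearIndepOn R ((span R (v '' s)).mkQ ∘ v) t :=
    ((linearIndepOn_union_iff_quotient hst).mp hv).2
  have hspan : span R (Set.range fun i : t ↦ ((span R (v '' s)).mkQ ∘ v) i)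
      = (span R (v '' (s ∪ t))).map (span R (v '' s)).mkQ := by
    rw [← Set.image_eq_range, map_mkQ_span_image_union]
  exact ⟨(Module.Basis.span hquot).map (LinearEquiv.ofEq _ _ hspan)⟩

theorem nonempty_equiv_of_span_image_union_eq [InvariantBasisNumber R] {v : ι → M} {v' : ι' → M}
    {s t : Set ι} {s' t' : Set ι'} (hv : LinearIndepOn R v (s ∪ t))
    (hv' : LinearIndepOn R v' (s' ∪ t')) (hst : Disjoint s t) (hst' : Disjoint s' t')
    (hs : span R (v '' s) = span R (v' '' s'))
    (hunion : span R (v '' (s ∪ t)) = span R (v' '' (s' ∪ t'))) :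
    Nonempty (t ≃ t') := by
  obtain ⟨b⟩ := nonempty_basis_map_mkQ_span_image_union hv hst
  obtain ⟨b'⟩ := nonempty_basis_map_mkQ_span_image_union hv' hst'
  rw [hs, hunion] at b
  exact ⟨b.indexEquiv b'⟩

theorem span_image_setOf_lt {P : Type*} [Preorder P] (v : ι → M) (d : ι → P) (p : P) :
    span R (v '' {i | p < d i}) = ⨆ q > p, span R (v '' {i | q ≤ d i}) := by
  have hunion : {i | p < d i} = ⋃ q > p, {i | q ≤ d i} := by
    ext i
    simp only [Set.mem_ofPred_eq, Set.mem_iUnion, exists_prop]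
    exact ⟨fun h ↦ ⟨d i, h, le_rfl⟩, fun ⟨_, hq, hqi⟩ ↦ hq.trans_le hqi⟩
  simp only [hunion, Set.image_iUnion, span_iUnion]

theorem setOf_le_eq_union_preimage {P : Type*} [PartialOrder P] (d : ι → P) (p : P) :
    {i | p ≤ d i} = {i | p < d i} ∪ d ⁻¹' {p} :=
  Set.ext fun _ ↦ le_iff_lt_or_eq.trans (or_congr_right eq_comm)

theorem disjoint_setOf_lt_preimage {P : Type*} [Preorder P] (d : ι → P) (p : P) :
    Disjoint {i | p < d i} (d ⁻¹' {p}) :=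
  Set.disjoint_left.mpr fun _ hlt heq ↦ hlt.ne' heq

theorem exists_equiv_of_span_image_setOf_le_eq [InvariantBasisNumber R] {P : Type*}
    [PartialOrder P] {v : ι → M} {v' : ι' → M} (hv : LinearIndependent R v)
    (hv' : LinearIndependent R v') (d : ι → P) (d' : ι' → P)
    (hspan : ∀ p, span R (v '' {i | p ≤ d i}) = span R (v' '' {j | p ≤ d' j})) :
    ∃ σ : ι ≃ ι', ∀ i, d' (σ i) = d i := by
  have hspan_lt (p : P) : span R (v '' {i | p < d i}) = span R (v' '' {j | p < d' j}) := by
    simp only [span_image_setOf_lt, hspan]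
  have hfiber (p : P) : Nonempty (d ⁻¹' {p} ≃ d' ⁻¹' {p}) :=
    nonempty_equiv_of_span_image_union_eq (hv.linearIndepOn _) (hv'.linearIndepOn _)
      (disjoint_setOf_lt_preimage d p) (disjoint_setOf_lt_preimage d' p) (hspan_lt p)
      (by simpa only [setOf_le_eq_union_preimage] using hspan p)
  exact ⟨Equiv.ofPreimageEquiv fun p ↦ (hfiber p).some, Equiv.ofPreimageEquiv_map _⟩

end LinearIndependent

namespace RFiltration

variable {K V ι ι' : Type*} [Field K] [AddCommGroup V] [Module K V] {𝓕 𝓖 : RFiltration K V}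

theorem nonempty_setOf_mem_F (𝓕 : RFiltration K V) (x : V) : {a | x ∈ 𝓕.F a}.Nonempty := by
  obtain ⟨a, ha⟩ := 𝓕.eventually_top
  exact ⟨a, (ha a le_rfl).ge Submodule.mem_top⟩

theorem bddAbove_setOf_mem_F (𝓕 : RFiltration K V) {x : V} (hx : x ≠ 0) :
    BddAbove {a | x ∈ 𝓕.F a} := by
  obtain ⟨u, hu⟩ := 𝓕.eventually_bot
  refine ⟨u, fun a (ha : x ∈ 𝓕.F a) ↦ le_of_not_ge fun hua ↦ hx ?_⟩
  rwa [hu a hua, Submodule.mem_bot] at ha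

theorem le_lambda_iff (𝓕 : RFiltration K V) {x : V} (hx : x ≠ 0) {a : ℝ} :
    a ≤ 𝓕.lambda x ↔ x ∈ 𝓕.F a := by
  refine ⟨fun ha ↦ ?_, fun ha ↦ le_csSup (𝓕.bddAbove_setOf_mem_F hx) ha⟩
  rw [𝓕.left_continuous a, Submodule.mem_iInf]
  rintro ⟨b, hb⟩
  obtain ⟨c, hc, hbc⟩ := exists_lt_of_lt_csSup (𝓕.nonempty_setOf_mem_F x) (hb.trans_le ha)
  exact 𝓕.antitone hbc.le hc

theorem Compatible.F_eq_span {e : ι → V} (h : 𝓕.Compatible e) (he : ∀ i, e i ≠ 0) (a : ℝ) :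
    𝓕.F a = Submodule.span K (e '' {i | a ≤ 𝓕.lambda (e i)}) := by
  have hpreimage : {i | a ≤ 𝓕.lambda (e i)} = e ⁻¹' 𝓕.F a := Set.ext fun i ↦ 𝓕.le_lambda_iff (he i)
  rw [hpreimage, Set.image_preimage_eq_range_inter]
  exact h a

theorem Compatible.F_inf_F_eq_span {e : ι → V} (hF : 𝓕.Compatible e) (hG : 𝓖.Compatible e)
    (he : LinearIndependent K e) (p : ℝ × ℝ) :
    𝓕.F p.1 ⊓ 𝓖.F p.2
      = Submodule.span K (e '' {i | p ≤ (𝓕.lambda (e i), 𝓖.lambda (e i))}) := by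
  rw [hF.F_eq_span he.ne_zero, hG.F_eq_span he.ne_zero, ← span_image_inter he]
  rfl

theorem scalar_product_well_defined_general (e : Module.Basis ι K V) (e' : Module.Basis ι' K V)
    (heF : 𝓕.Compatible e) (heG : 𝓖.Compatible e)
    (he'F : 𝓕.Compatible e') (he'G : 𝓖.Compatible e') :
    ∃ σ : ι ≃ ι', ∀ i, (𝓕.lambda (e' (σ i)), 𝓖.lambda (e' (σ i)))
      = (𝓕.lambda (e i), 𝓖.lambda (e i)) := by
  have he := e.linearIndependent
  have he' := e'.linearIndependent
  refine exists_equiv_of_span_image_setOf_le_eq he he' (fun i ↦ (𝓕.lambda (e i), 𝓖.lambda (e i)))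
    (fun j ↦ (𝓕.lambda (e' j), 𝓖.lambda (e' j))) fun p ↦ ?_
  rw [← heF.F_inf_F_eq_span heG he, ← he'F.F_inf_F_eq_span he'G he']

end RFiltration

/-- **Well-definedness of the scalar product of filtrations (Section 5.4).**
If `e` and `e'` are two bases of `V`, each compatible with both `ℝ`-filtrations
`𝓕` and `𝓖`, then `∑ᵢ λ_𝓕(eᵢ) λ_𝓖(eᵢ) = ∑ᵢ λ_𝓕(e'ᵢ) λ_𝓖(e'ᵢ)`. -/
theorem RFiltration.scalar_product_well_defined
    (K V : Type*) [Field K] [AddCommGroup V] [Module K V] [FiniteDimensional K V]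
    [Nontrivial V] (r : ℕ) (𝓕 𝓖 : RFiltration K V)
    (e e' : Module.Basis (Fin r) K V)
    (heF : 𝓕.Compatible e) (heG : 𝓖.Compatible e)
    (he'F : 𝓕.Compatible e') (he'G : 𝓖.Compatible e') :
    ∑ i : Fin r, 𝓕.lambda (e i) * 𝓖.lambda (e i)
      = ∑ i : Fin r, 𝓕.lambda (e' i) * 𝓖.lambda (e' i) := by
  obtain ⟨σ, hσ⟩ := scalar_product_well_defined_general e e' heF heG he'F he'G
  exact Fintype.sum_equiv σ _ _ fun i ↦ congrArg (fun p ↦ p.1 * p.2) (hσ i).symm
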